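/- There exists a constant c > 0 such that for every m ∈ ℕ with m ≥ 1 and every real x ≥ 0, one has |e^{−m·x} − (1 + x)^{−m}| ≤ c · x. -/

import Mathlib

open Real

/-!
Write `L = log (1 + x) ≤ x`, so that the error is `e^{-tL} - e^{-tx}` with `t = m`. The tangent
line of `u ↦ e^{-u}` at `tL` bounds it by `t (x - L) e^{-tL}`. Since `x - L ≤ (x / 2) L`, this is
at most `(x / 2) (tL) e^{-tL}`, and `u e^{-u} ≤ e^{-1}` removes the dependence on `t`. The constant
`1 / (2e)` is sharp: it is approached as `x → 0` with `t x = 1`.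
-/

theorem exp_neg_sub_exp_neg_le (a b : ℝ) : exp (-a) - exp (-b) ≤ (b - a) * exp (-a) := by
  have tangent_line : (a - b + 1) * exp (-a) ≤ exp (a - b) * exp (-a) := by
    gcongr
    exact add_one_le_exp (a - b)
  have exp_split : exp (a - b) * exp (-a) = exp (-b) := by
    rw [← exp_add]
    ring_nf
  linarith

theorem sub_log_one_add_le_half_mul_log_one_add {x : ℝ} (hx : 0 ≤ x) :
    x - log (1 + x) ≤ x / 2 * log (1 + x) := by
  have two_mul_le : 2 * x ≤ log (1 + x) * (x + 2) :=
    (div_le_iff₀ (by positivity)).mp (le_log_one_add_of_nonneg hx)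
  linarith

theorem exp_neg_mul_le_one_add_rpow_neg {t x : ℝ} (ht : 0 ≤ t) (hx : -1 < x) :
    exp (-t * x) ≤ (1 + x) ^ (-t) := by
  have one_add_pos : 0 < 1 + x := by linarith
  have log_le : log (1 + x) ≤ x := by linarith [log_le_sub_one_of_pos one_add_pos]
  rw [rpow_def_of_pos one_add_pos, exp_le_exp]
  linarith [mul_le_mul_of_nonneg_left log_le ht]

theorem one_add_rpow_neg_sub_exp_neg_mul_le {t x : ℝ} (ht : 0 ≤ t) (hx : 0 ≤ x) :
    (1 + x) ^ (-t) - exp (-t * x) ≤ exp (-1) / 2 * x := by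
  calc (1 + x) ^ (-t) - exp (-t * x)
      = exp (-(t * log (1 + x))) - exp (-(t * x)) := by
        rw [rpow_def_of_pos (by positivity)]
        ring_nf
    _ ≤ t * (x - log (1 + x)) * exp (-(t * log (1 + x))) := by
        rw [mul_sub]
        exact exp_neg_sub_exp_neg_le _ _
    _ ≤ t * (x / 2 * log (1 + x)) * exp (-(t * log (1 + x))) := by
        gcongr
        exact sub_log_one_add_le_half_mul_log_one_add hx
    _ = x / 2 * (t * log (1 + x) * exp (-(t * log (1 + x)))) := by ring
    _ ≤ x / 2 * exp (-1) := by
        gcongr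
        exact mul_exp_neg_le_exp_neg_one _
    _ = exp (-1) / 2 * x := by ring

theorem backward_euler_smooth_symbol_general {t x : ℝ} (ht : 0 ≤ t) (hx : 0 ≤ x) :
    |exp (-t * x) - (1 + x) ^ (-t)| ≤ exp (-1) / 2 * x := by
  rw [abs_sub_comm,
    abs_of_nonneg (sub_nonneg.mpr (exp_neg_mul_le_one_add_rpow_neg ht (by linarith)))]
  exact one_add_rpow_neg_sub_exp_neg_mul_le ht hx

/-- Scalar smooth-data error estimate for the backward Euler scheme:
there is `c > 0` with `|e^{-mx} - (1+x)^{-m}| ≤ c·x` for all `m ≥ 1`, `x ≥ 0`. -/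
theorem backward_euler_smooth_symbol :
    ∃ c : ℝ, 0 < c ∧ ∀ m : ℕ, 1 ≤ m → ∀ x : ℝ, 0 ≤ x →
      |Real.exp (-(m : ℝ) * x) - ((1 + x) ^ m)⁻¹| ≤ c * x := by
  refine ⟨exp (-1) / 2, by positivity, fun m _ x hx => ?_⟩
  rw [← rpow_natCast, ← rpow_neg (by positivity)]
  exact backward_euler_smooth_symbol_general m.cast_nonneg hx
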